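/- Let two ESRs i and j have individual feasible sets S_i, S_j (with their own efficiencies, ramp limits, SOC limits and capacity limits) and bid curves f^D_{i,t}, f^C_{i,t}, f^D_{j,t}, f^C_{j,t} (discharge curves convex differentiable, charge curves concave differentiable). Let realized dispatches (g^D_i, g^C_i, E_i) ∈ S_i and (g^D_j, g^C_j, E_j) ∈ S_j be given, and suppose there is an interval t* ∈ {1,…,T} at which both ESRs are marginal: for each k ∈ {i, j}, either 0 < g^D_{k,t*} < ḡ^D_k (strictly discharging within capacity) or 0 < g^C_{k,t*} < ḡ^C_k (strictly charging within capacity), with the corresponding ramp constraints between intervals t*−1 and t* and between t* and t*+1 strictly nonbinding, and E̲_k < E_{k,t'} < Ē_k for all t' ≥ t*. Define the marginal bid-in price m_k = (f^D_{k,t*})'(g^D_{k,t*}) if k is discharging at t* and m_k = (f^C_{k,t*})'(g^C_{k,t*}) if k is charging at t*. If m_i ≠ m_j, then for every uniform price vector π ∈ ℝ^T, at least one of LOC_i(π) > 0 or LOC_j(π) > 0 holds; i.e., no uniform pricing scheme yields zero lost opportunity cost for both ESRs. -/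

import Mathlib

/-- Parameters of a (generalized) energy storage resource (ESR):
discharge/charge efficiencies, initial SOC and initial charge/discharge
levels, ramp limits, SOC limits and capacity limits. -/
structure ESRParams where
  xiD : ℝ
  xiC : ℝ
  hxiD : xiD ∈ Set.Ioc (0 : ℝ) 1
  hxiC : xiC ∈ Set.Ioc (0 : ℝ) 1
  E0 : ℝ
  pD0 : ℝ
  pC0 : ℝ
  rDup : ℝ
  rDdn : ℝ
  rCup : ℝ
  rCdn : ℝ
  hrDup : 0 ≤ rDup
  hrDdn : 0 ≤ rDdn
  hrCup : 0 ≤ rCup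
  hrCdn : 0 ≤ rCdn
  Elo : ℝ
  Ehi : ℝ
  hElim : Elo ≤ Ehi
  gDmax : ℝ
  gCmax : ℝ
  hgD : 0 < gDmax
  hgC : 0 < gCmax

/-- The individual feasible set `S` of the ESR over horizon `T`
(intervals `t = 1, …, T`; index `0` carries the initial conditions):
SOC transition, ramp constraints, SOC limits and capacity limits. -/
def Feasible (T : ℕ) (P : ESRParams) (pD pC e : ℕ → ℝ) : Prop :=
  pD 0 = P.pD0 ∧ pC 0 = P.pC0 ∧ e 0 = P.E0 ∧
  ∀ t ∈ Finset.Icc 1 T,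
    e t - e (t - 1) = P.xiC * pC t - pD t / P.xiD ∧
    -P.rDdn ≤ pD t - pD (t - 1) ∧ pD t - pD (t - 1) ≤ P.rDup ∧
    -P.rCdn ≤ pC t - pC (t - 1) ∧ pC t - pC (t - 1) ≤ P.rCup ∧
    P.Elo ≤ e t ∧ e t ≤ P.Ehi ∧
    0 ≤ pD t ∧ pD t ≤ P.gDmax ∧
    0 ≤ pC t ∧ pC t ≤ P.gCmax

/-- Profit of the ESR under (possibly distinct) discharge/charge price
sequences `piD, piC`, with bid curves `fD` (discharge cost) and `fC`
(charging benefit).  For a uniform price `π`, take `piD = piC = π`. -/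
def profit (T : ℕ) (piD piC : ℕ → ℝ) (fD fC : ℕ → ℝ → ℝ)
    (pD pC : ℕ → ℝ) : ℝ :=
  ∑ t ∈ Finset.Icc 1 T,
    (piD t * pD t - piC t * pC t - fD t (pD t) + fC t (pC t))

/-- The ESR is "marginal" in discharging at interval `t`: discharge strictly
within capacity, discharge ramp constraints strictly nonbinding between
`t-1` and `t` and between `t` and `t+1` (the latter only required when
`t < T`), and SOC strictly interior from `t` to the end of the horizon. -/
def MarginalD (T : ℕ) (P : ESRParams) (gD e : ℕ → ℝ) (t : ℕ) : Prop :=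
  0 < gD t ∧ gD t < P.gDmax ∧
  (-P.rDdn < gD t - gD (t - 1) ∧ gD t - gD (t - 1) < P.rDup) ∧
  (t < T → -P.rDdn < gD (t + 1) - gD t ∧ gD (t + 1) - gD t < P.rDup) ∧
  (∀ t', t ≤ t' → t' ≤ T → P.Elo < e t' ∧ e t' < P.Ehi)

/-- The ESR is "marginal" in charging at interval `t`. -/
def MarginalC (T : ℕ) (P : ESRParams) (gC e : ℕ → ℝ) (t : ℕ) : Prop :=
  0 < gC t ∧ gC t < P.gCmax ∧
  (-P.rCdn < gC t - gC (t - 1) ∧ gC t - gC (t - 1) < P.rCup) ∧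
  (t < T → -P.rCdn < gC (t + 1) - gC t ∧ gC (t + 1) - gC t < P.rCup) ∧
  (∀ t', t ≤ t' → t' ≤ T → P.Elo < e t' ∧ e t' < P.Ehi)

/-- The set of profits attainable over the feasible set `S`. -/
def profitSet (T : ℕ) (P : ESRParams) (piD piC : ℕ → ℝ)
    (fD fC : ℕ → ℝ → ℝ) : Set ℝ :=
  {x | ∃ pD pC e, Feasible T P pD pC e ∧ x = profit T piD piC fD fC pD pC}

/-- `Q(π) = sup` of the profit over the feasible set `S`. -/
noncomputable def Qmax (T : ℕ) (P : ESRParams) (piD piC : ℕ → ℝ)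
    (fD fC : ℕ → ℝ → ℝ) : ℝ :=
  sSup (profitSet T P piD piC fD fC)

/-- Lost opportunity cost of a dispatch: `LOC(π) = Q(π) − profit(π; ·)`. -/
noncomputable def LOC (T : ℕ) (P : ESRParams) (piD piC : ℕ → ℝ)
    (fD fC : ℕ → ℝ → ℝ) (pD pC : ℕ → ℝ) : ℝ :=
  Qmax T P piD piC fD fC - profit T piD piC fD fC pD pC

open Filter Topology in
theorem aux_bdd (T : ℕ) (P : ESRParams) (π : ℕ → ℝ) (fD fC : ℕ → ℝ → ℝ)
    (hD : ∀ t, Differentiable ℝ (fD t)) (hC : ∀ t, Differentiable ℝ (fC t)) :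
    BddAbove (profitSet T P π π fD fC) := by
  have h : ∀ t, ∃ B, ∀ x y : ℝ, 0 ≤ x → x ≤ P.gDmax → 0 ≤ y → y ≤ P.gCmax →
      π t * x - π t * y - fD t x + fC t y ≤ B := by
    intro t
    have h1 := (hD t).continuous
    have h2 := (hC t).continuous
    have hc : Continuous (fun x => π t * x - fD t x) := by fun_prop
    have hc' : Continuous (fun x => - (π t * x) + fC t x) := by fun_prop
    obtain ⟨B, hB⟩ := (isCompact_Icc (a := (0:ℝ)) (b := P.gDmax)).bddAbove_image hc.continuousOn
    obtain ⟨C, hC⟩ := (isCompact_Icc (a := (0:ℝ)) (b := P.gCmax)).bddAbove_image hc'.continuousOn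
    refine ⟨B + C, fun x y hx hx' hy hy' => ?_⟩
    have a1 := hB (Set.mem_image_of_mem _ (Set.mem_Icc.2 ⟨hx, hx'⟩))
    have a2 := hC (Set.mem_image_of_mem _ (Set.mem_Icc.2 ⟨hy, hy'⟩))
    linarith
  choose B hB using h
  refine ⟨∑ t ∈ Finset.Icc 1 T, B t, ?_⟩
  rintro _ ⟨pD, pC, e, hf, rfl⟩
  refine Finset.sum_le_sum fun t ht => ?_
  obtain ⟨-, -, -, -, -, -, -, h1, h2, h3, h4⟩ := hf.2.2.2 t ht
  exact hB t _ _ h1 h2 h3 h4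

theorem aux_le (T : ℕ) (P : ESRParams) (π : ℕ → ℝ) (fD fC : ℕ → ℝ → ℝ)
    (hD : ∀ t, Differentiable ℝ (fD t)) (hC : ∀ t, Differentiable ℝ (fC t))
    (gD gC : ℕ → ℝ) (h : LOC T P π π fD fC gD gC ≤ 0) (pD pC e : ℕ → ℝ)
    (hf : Feasible T P pD pC e) :
    profit T π π fD fC pD pC ≤ profit T π π fD fC gD gC := by
  have := le_csSup (aux_bdd T P π fD fC hD hC) ⟨pD, pC, e, hf, rfl⟩
  unfold LOC Qmax at h
  linarith

open Filter Topology in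
theorem aux_D (T : ℕ) (P : ESRParams) (π : ℕ → ℝ) (fD fC : ℕ → ℝ → ℝ)
    (hD : ∀ t, Differentiable ℝ (fD t)) (hC : ∀ t, Differentiable ℝ (fC t))
    (gD gC e : ℕ → ℝ) (h : LOC T P π π fD fC gD gC ≤ 0)
    (hf : Feasible T P gD gC e) (s : ℕ) (h1 : 1 ≤ s) (hT : s ≤ T)
    (hm : MarginalD T P gD e s) : π s = deriv (fD s) (gD s) := by
  obtain ⟨m1, m2, ⟨m3, m4⟩, m5, m6⟩ := hm
  have ev : ∀ {a b c : ℝ}, a < b → ∀ᶠ ε in 𝓝 (0:ℝ), a < b + c * ε := by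
    intro a b c hab
    have hc : Continuous (fun ε : ℝ => b + c * ε) := by fun_prop
    exact (hc.tendsto 0).eventually (lt_mem_nhds (by simpa using hab))
  set k : ℝ := -(1 / P.xiD) with hk
  have hfe : ∀ᶠ ε in 𝓝 (0:ℝ), Feasible T P (Function.update gD s (gD s + ε)) gC
      (fun t => if s ≤ t then e t + k * ε else e t) := by
    have e6 : ∀ᶠ ε in 𝓝 (0:ℝ), ∀ t ∈ Finset.Icc s T,
        P.Elo < e t + k * ε ∧ -P.Ehi < -e t + (-k) * ε := by
      rw [Filter.eventually_all_finset]
      intro t ht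
      obtain ⟨a, b⟩ := Finset.mem_Icc.1 ht
      exact (ev (m6 t a b).1).and (ev (neg_lt_neg (m6 t a b).2))
    have e5 : ∀ᶠ ε in 𝓝 (0:ℝ), s < T → -P.rDdn < gD (s+1) - gD s + (-1) * ε ∧
        -P.rDup < -(gD (s+1) - gD s) + 1 * ε := by
      by_cases hs : s < T
      · filter_upwards [ev (c := -1) (m5 hs).1, ev (c := 1) (neg_lt_neg (m5 hs).2)] with ε a b _
        exact ⟨a, b⟩
      · exact Eventually.of_forall fun _ h => absurd h hs
    filter_upwards [e6, e5, ev (c := 1) m1, ev (c := -1) (neg_lt_neg m2), ev (c := 1) m3,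
      ev (c := -1) (neg_lt_neg m4)] with ε e6 e5 e1 e2 e3 e4
    obtain ⟨f1, f2, f3, f4⟩ := hf
    have s0 : (0:ℕ) ≠ s := by omega
    have s0' : ¬ s ≤ 0 := by omega
    refine ⟨by simpa [Function.update_of_ne s0] using f1,
      by simpa [Function.update_of_ne s0] using f2, by simpa [s0'] using f3, ?_⟩
    intro t ht
    obtain ⟨q1, q2, q3, q4, q5, q6, q7, q8, q9, q10, q11⟩ := f4 t ht
    obtain ⟨ht1, ht2⟩ := Finset.mem_Icc.1 ht
    rcases lt_trichotomy t s with hts | hts | hts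
    · have n1 : t ≠ s := by omega
      have n2 : t - 1 ≠ s := by omega
      have n3 : ¬ s ≤ t := by omega
      have n4 : ¬ s ≤ t - 1 := by omega
      simp only [Function.update_of_ne n1, Function.update_of_ne n2, if_neg n3, if_neg n4]
      exact ⟨q1, q2, q3, q4, q5, q6, q7, q8, q9, q10, q11⟩
    · subst hts
      have n2 : t - 1 ≠ t := by omega
      have n4 : ¬ t ≤ t - 1 := by omega
      have := e6 t (Finset.mem_Icc.2 ⟨le_rfl, hT⟩)
      simp only [Function.update_self, Function.update_of_ne n2, le_refl, if_true, if_neg n4]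
      refine ⟨?_, ?_, ?_, ?_, ?_, ?_, ?_, ?_, ?_, ?_, ?_⟩ <;> first | linarith | skip
      all_goals have : e t + k * ε - e (t-1) = (e t - e (t-1)) + k * ε := by ring
      all_goals (rw [this, q1, hk]; ring)
    · have n1 : t ≠ s := by omega
      have n3 : s ≤ t := by omega
      have n4 : s ≤ t - 1 := by omega
      have := e6 t (Finset.mem_Icc.2 ⟨n3, ht2⟩)
      simp only [Function.update_of_ne n1, if_pos n3, if_pos n4]
      by_cases n2 : t - 1 = s
      · have hst : t = s + 1 := by omega
        subst hst
        have := e5 (by omega)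
        simp only [Nat.add_sub_cancel, Function.update_self] at *
        refine ⟨?_, ?_, ?_, ?_, ?_, ?_, ?_, ?_, ?_, ?_, ?_⟩ <;> linarith
      · simp only [Function.update_of_ne n2]
        refine ⟨?_, ?_, ?_, ?_, ?_, ?_, ?_, ?_, ?_, ?_, ?_⟩ <;> linarith
  have hs : s ∈ Finset.Icc 1 T := Finset.mem_Icc.2 ⟨h1, hT⟩
  have hmax : IsLocalMax (fun ε : ℝ => (1:ℝ) * (π s * (gD s + ε) - fD s (gD s + ε))) 0 := by
    filter_upwards [hfe] with ε hε
    have hle := aux_le T P π fD fC hD hC gD gC h _ _ _ hε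
    unfold profit at hle
    rw [← Finset.add_sum_erase _ _ hs, ← Finset.add_sum_erase _ _ hs] at hle
    rw [Finset.sum_congr rfl (g := fun t => π t * gD t - π t * gC t - fD t (gD t) + fC t (gC t))
      (fun t ht => by simp only [Function.update_of_ne (Finset.ne_of_mem_erase ht)])] at hle
    simp only [Function.update_self] at hle
    simp only [add_zero]
    linarith
  have hd : HasDerivAt (fun ε : ℝ => (1:ℝ) * (π s * (gD s + ε) - fD s (gD s + ε)))
      ((1:ℝ) * (π s * 1 - deriv (fD s) (gD s) * 1)) 0 := by
    have hi : HasDerivAt (fun ε : ℝ => gD s + ε) 1 0 := (hasDerivAt_id (0:ℝ)).const_add _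
    have hg : HasDerivAt (fD s) (deriv (fD s) (gD s)) (gD s + 0) := by
      rw [add_zero]; exact (hD s _).hasDerivAt
    exact ((hi.const_mul _).sub (hg.comp (0:ℝ) hi)).const_mul _
  have := hmax.hasDerivAt_eq_zero hd
  linarith

open Filter Topology in
theorem aux_C (T : ℕ) (P : ESRParams) (π : ℕ → ℝ) (fD fC : ℕ → ℝ → ℝ)
    (hD : ∀ t, Differentiable ℝ (fD t)) (hC : ∀ t, Differentiable ℝ (fC t))
    (gD gC e : ℕ → ℝ) (h : LOC T P π π fD fC gD gC ≤ 0)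
    (hf : Feasible T P gD gC e) (s : ℕ) (h1 : 1 ≤ s) (hT : s ≤ T)
    (hm : MarginalC T P gC e s) : π s = deriv (fC s) (gC s) := by
  obtain ⟨m1, m2, ⟨m3, m4⟩, m5, m6⟩ := hm
  have ev : ∀ {a b c : ℝ}, a < b → ∀ᶠ ε in 𝓝 (0:ℝ), a < b + c * ε := by
    intro a b c hab
    have hc : Continuous (fun ε : ℝ => b + c * ε) := by fun_prop
    exact (hc.tendsto 0).eventually (lt_mem_nhds (by simpa using hab))
  set k : ℝ := P.xiC with hk
  have hfe : ∀ᶠ ε in 𝓝 (0:ℝ), Feasible T P gD (Function.update gC s (gC s + ε))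
      (fun t => if s ≤ t then e t + k * ε else e t) := by
    have e6 : ∀ᶠ ε in 𝓝 (0:ℝ), ∀ t ∈ Finset.Icc s T,
        P.Elo < e t + k * ε ∧ -P.Ehi < -e t + (-k) * ε := by
      rw [Filter.eventually_all_finset]
      intro t ht
      obtain ⟨a, b⟩ := Finset.mem_Icc.1 ht
      exact (ev (m6 t a b).1).and (ev (neg_lt_neg (m6 t a b).2))
    have e5 : ∀ᶠ ε in 𝓝 (0:ℝ), s < T → -P.rCdn < gC (s+1) - gC s + (-1) * ε ∧
        -P.rCup < -(gC (s+1) - gC s) + 1 * ε := by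
      by_cases hs : s < T
      · filter_upwards [ev (c := -1) (m5 hs).1, ev (c := 1) (neg_lt_neg (m5 hs).2)] with ε a b _
        exact ⟨a, b⟩
      · exact Eventually.of_forall fun _ h => absurd h hs
    filter_upwards [e6, e5, ev (c := 1) m1, ev (c := -1) (neg_lt_neg m2), ev (c := 1) m3,
      ev (c := -1) (neg_lt_neg m4)] with ε e6 e5 e1 e2 e3 e4
    obtain ⟨f1, f2, f3, f4⟩ := hf
    have s0 : (0:ℕ) ≠ s := by omega
    have s0' : ¬ s ≤ 0 := by omega
    refine ⟨by simpa [Function.update_of_ne s0] using f1,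
      by simpa [Function.update_of_ne s0] using f2, by simpa [s0'] using f3, ?_⟩
    intro t ht
    obtain ⟨q1, q2, q3, q4, q5, q6, q7, q8, q9, q10, q11⟩ := f4 t ht
    obtain ⟨ht1, ht2⟩ := Finset.mem_Icc.1 ht
    rcases lt_trichotomy t s with hts | hts | hts
    · have n1 : t ≠ s := by omega
      have n2 : t - 1 ≠ s := by omega
      have n3 : ¬ s ≤ t := by omega
      have n4 : ¬ s ≤ t - 1 := by omega
      simp only [Function.update_of_ne n1, Function.update_of_ne n2, if_neg n3, if_neg n4]
      exact ⟨q1, q2, q3, q4, q5, q6, q7, q8, q9, q10, q11⟩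
    · subst hts
      have n2 : t - 1 ≠ t := by omega
      have n4 : ¬ t ≤ t - 1 := by omega
      have := e6 t (Finset.mem_Icc.2 ⟨le_rfl, hT⟩)
      simp only [Function.update_self, Function.update_of_ne n2, le_refl, if_true, if_neg n4]
      refine ⟨?_, ?_, ?_, ?_, ?_, ?_, ?_, ?_, ?_, ?_, ?_⟩ <;> first | linarith | skip
      all_goals have : e t + k * ε - e (t-1) = (e t - e (t-1)) + k * ε := by ring
      all_goals (rw [this, q1, hk]; ring)
    · have n1 : t ≠ s := by omega
      have n3 : s ≤ t := by omega
      have n4 : s ≤ t - 1 := by omega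
      have := e6 t (Finset.mem_Icc.2 ⟨n3, ht2⟩)
      simp only [Function.update_of_ne n1, if_pos n3, if_pos n4]
      by_cases n2 : t - 1 = s
      · have hst : t = s + 1 := by omega
        subst hst
        have := e5 (by omega)
        simp only [Nat.add_sub_cancel, Function.update_self] at *
        refine ⟨?_, ?_, ?_, ?_, ?_, ?_, ?_, ?_, ?_, ?_, ?_⟩ <;> linarith
      · simp only [Function.update_of_ne n2]
        refine ⟨?_, ?_, ?_, ?_, ?_, ?_, ?_, ?_, ?_, ?_, ?_⟩ <;> linarith
  have hs : s ∈ Finset.Icc 1 T := Finset.mem_Icc.2 ⟨h1, hT⟩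
  have hmax : IsLocalMax (fun ε : ℝ => (-1:ℝ) * (π s * (gC s + ε) - fC s (gC s + ε))) 0 := by
    filter_upwards [hfe] with ε hε
    have hle := aux_le T P π fD fC hD hC gD gC h _ _ _ hε
    unfold profit at hle
    rw [← Finset.add_sum_erase _ _ hs, ← Finset.add_sum_erase _ _ hs] at hle
    rw [Finset.sum_congr rfl (g := fun t => π t * gD t - π t * gC t - fD t (gD t) + fC t (gC t))
      (fun t ht => by simp only [Function.update_of_ne (Finset.ne_of_mem_erase ht)])] at hle
    simp only [Function.update_self] at hle
    simp only [add_zero]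
    linarith
  have hd : HasDerivAt (fun ε : ℝ => (-1:ℝ) * (π s * (gC s + ε) - fC s (gC s + ε)))
      ((-1:ℝ) * (π s * 1 - deriv (fC s) (gC s) * 1)) 0 := by
    have hi : HasDerivAt (fun ε : ℝ => gC s + ε) 1 0 := (hasDerivAt_id (0:ℝ)).const_add _
    have hg : HasDerivAt (fC s) (deriv (fC s) (gC s)) (gC s + 0) := by
      rw [add_zero]; exact (hC s _).hasDerivAt
    exact ((hi.const_mul _).sub (hg.comp (0:ℝ) hi)).const_mul _
  have := hmax.hasDerivAt_eq_zero hd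
  linarith

theorem no_uniform_price_zero_LOC
    (T : ℕ) (Pi Pj : ESRParams)
    (fDi fCi fDj fCj : ℕ → ℝ → ℝ)
    (hfDiconv : ∀ t, ConvexOn ℝ Set.univ (fDi t))
    (hfDidiff : ∀ t, Differentiable ℝ (fDi t))
    (hfCiconc : ∀ t, ConcaveOn ℝ Set.univ (fCi t))
    (hfCidiff : ∀ t, Differentiable ℝ (fCi t))
    (hfDjconv : ∀ t, ConvexOn ℝ Set.univ (fDj t))
    (hfDjdiff : ∀ t, Differentiable ℝ (fDj t))
    (hfCjconc : ∀ t, ConcaveOn ℝ Set.univ (fCj t))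
    (hfCjdiff : ∀ t, Differentiable ℝ (fCj t))
    (gDi gCi Ei gDj gCj Ej : ℕ → ℝ)
    (hfeasi : Feasible T Pi gDi gCi Ei)
    (hfeasj : Feasible T Pj gDj gCj Ej)
    (tstar : ℕ) (ht1 : 1 ≤ tstar) (htT : tstar ≤ T)
    -- marginal bid-in prices of the two ESRs at t*
    (mi mj : ℝ)
    (hi : (MarginalD T Pi gDi Ei tstar ∧ mi = deriv (fDi tstar) (gDi tstar)) ∨
          (MarginalC T Pi gCi Ei tstar ∧ mi = deriv (fCi tstar) (gCi tstar)))
    (hj : (MarginalD T Pj gDj Ej tstar ∧ mj = deriv (fDj tstar) (gDj tstar)) ∨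
          (MarginalC T Pj gCj Ej tstar ∧ mj = deriv (fCj tstar) (gCj tstar)))
    (hne : mi ≠ mj) :
    ∀ π : ℕ → ℝ,
      0 < LOC T Pi π π fDi fCi gDi gCi ∨
      0 < LOC T Pj π π fDj fCj gDj gCj := by
  
  intro π
  by_contra hcon
  push Not at hcon
  obtain ⟨ha, hb⟩ := hcon
  have e1 : π tstar = mi := by
    rcases hi with ⟨hm, rfl⟩ | ⟨hm, rfl⟩
    · exact aux_D T Pi π fDi fCi hfDidiff hfCidiff gDi gCi Ei ha hfeasi tstar ht1 htT hm
    · exact aux_C T Pi π fDi fCi hfDidiff hfCidiff gDi gCi Ei ha hfeasi tstar ht1 htT hm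
  have e2 : π tstar = mj := by
    rcases hj with ⟨hm, rfl⟩ | ⟨hm, rfl⟩
    · exact aux_D T Pj π fDj fCj hfDjdiff hfCjdiff gDj gCj Ej hb hfeasj tstar ht1 htT hm
    · exact aux_C T Pj π fDj fCj hfDjdiff hfCjdiff gDj gCj Ej hb hfeasj tstar ht1 htT hm
  exact hne (e1.symm.trans e2)
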